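/- arXiv:2402.03938 — 2 statements merged into one kernel-verified Lean document; each statement's English description precedes it below -/
import Mathlib

section
/- Let C be an abelian code in A_q(r_1,…,r_s) and let e be its generating idempotent. Then for every α ∈ U, d_α*(C) = mad(M(φ_{α,e})), and consequently d*(C) = max{mad(M(φ_{α,e})) : α ∈ U}. -/
open Classical

noncomputable section

namespace AbelianCodes

/-- The index set `I = Z_{r 0} × ⋯ × Z_{r (s-1)}`. -/
abbrev Idx {s : ℕ} (r : Fin s → ℕ) : Type := ∀ k, ZMod (r k)

variable {F : Type*} [Field F]

/-- The support of a hypermatrix. -/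
def hsupp {s : ℕ} {r : Fin s → ℕ} (M : Idx r → F) : Set (Idx r) := {i | M i ≠ 0}

/-- The hypercolumn `H_M(k,b)` of a hypermatrix, viewed as an `(s-1)`-dimensional
hypermatrix indexed by `∏_{j ≠ k} Z_{r j}`. -/
def hypercol {s : ℕ} {r : Fin (s+1) → ℕ} (M : Idx r → F) (k : Fin (s+1)) (b : ZMod (r k)) :
    Idx (fun j => r (k.succAbove j)) → F :=
  fun i => M (k.insertNth b i)

/-- `ω_M(k,b)`: the number of consecutive zero hypercolumns
`H_M(k,b+1), H_M(k,b+2), …` (indices modulo `r k`). -/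
def runLen {s : ℕ} {r : Fin (s+1) → ℕ} (M : Idx r → F) (k : Fin (s+1)) (b : ZMod (r k)) : ℕ :=
  ((Finset.Ico 1 (r k)).filter
    (fun j => ∀ m : ℕ, m ∈ Finset.Icc 1 j → hypercol M k (b + (m : ZMod (r k))) = 0)).card

/-- The apparent distance `d*(M)` of a hypermatrix, defined recursively on the
number of variables.  (A `0`-dimensional hypermatrix is a scalar, of apparent
distance `1` if nonzero and `0` otherwise; with this convention the `1`-dimensional
case becomes `max {ω_M(b)+1 : a_b ≠ 0}` and the higher-dimensional case becomes
`max_k max {(ω_M(k,b)+1)·d*(H_M(k,b)) : H_M(k,b) ≠ 0}`, since zero hypermatrices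
have apparent distance `0`.) -/
def apd : {s : ℕ} → (r : Fin s → ℕ) → (Idx r → F) → ℕ
  | 0, _, M => if M finZeroElim = 0 then 0 else 1
  | _+1, r, M =>
      Finset.univ.sup fun k =>
        Finset.univ.sup fun b : Fin (r k) =>
          (runLen M k ((b : ℕ) : ZMod (r k)) + 1) *
            apd (fun j => r (k.succAbove j)) (hypercol M k ((b : ℕ) : ZMod (r k)))

/-- The `q^t`-orbit `Q_t(a)` of `a ∈ I`. -/
def qOrbit {s : ℕ} (r : Fin s → ℕ) (q t : ℕ) (a : Idx r) : Set (Idx r) :=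
  {i | ∃ n : ℕ, ∀ k, i k = (q : ZMod (r k)) ^ (t * n) * a k}

/-- `D` is a union of `q^t`-orbits. -/
def OrbitUnion {s : ℕ} (r : Fin s → ℕ) (q t : ℕ) (D : Set (Idx r)) : Prop :=
  ∀ a ∈ D, qOrbit r q t a ⊆ D

/-- The hypermatrix afforded by `D ⊆ I`: entry `0` at indices in `D`, entry `1` elsewhere. -/
def afforded {s : ℕ} (r : Fin s → ℕ) (D : Set (Idx r)) : Idx r → F :=
  fun i => if i ∈ D then 0 else 1

/-- `M` is a `q^t`-orbits hypermatrix, i.e. the hypermatrix afforded by some union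
of `q^t`-orbits. -/
def IsOrbitMx {s : ℕ} (r : Fin s → ℕ) (q t : ℕ) (M : Idx r → F) : Prop :=
  ∃ D : Set (Idx r), OrbitUnion r q t D ∧ M = afforded r D

/-- The minimum apparent distance `mad(M) = min {d*(P) : P a q^t-orbits hypermatrix,
`0 ≠ P ≤ M`}`, where `P ≤ M` means `supp P ⊆ supp M`. -/
def mad {s : ℕ} (r : Fin s → ℕ) (q t : ℕ) (M : Idx r → F) : ℕ :=
  sInf {d | ∃ P : Idx r → F, IsOrbitMx r q t P ∧ P ≠ 0 ∧ hsupp P ⊆ hsupp M ∧ apd r P = d}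

/-- The `q^t`-cyclotomic coset of `b` modulo `r`. -/
def cycCoset (r q t : ℕ) (b : ZMod r) : Set (ZMod r) :=
  {x | ∃ n : ℕ, x = (q : ZMod r) ^ (t * n) * b}



variable {F : Type*} [Field F] {L : Type*} [Field L] [Algebra F L]

/-- An abelian code: a subspace of the group algebra `F[∏ Z_{r k}]` (identified
with the space of coefficient functions `I → F`) which is closed under all
translations, i.e. an ideal. -/
def IsAbelianCode {s : ℕ} {r : Fin s → ℕ} (C : Submodule F (Idx r → F)) : Prop :=
  ∀ f ∈ C, ∀ a : Idx r, (fun i => f (i - a)) ∈ C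

/-- Convolution: the multiplication of the group algebra in the coefficient
function picture. -/
def conv {s : ℕ} {r : Fin s → ℕ} [∀ k, NeZero (r k)] (f g : Idx r → F) : Idx r → F :=
  fun i => ∑ u : Idx r, f u * g (i - u)

/-- The (discrete) Fourier transform `φ_{α,f}(j) = f(α^j)` of a coefficient
function `f : I → F` with respect to `α`, with values in the extension `L`. -/
def fourier {s : ℕ} {r : Fin s → ℕ} [∀ k, NeZero (r k)] (α : Fin s → L) (f : Idx r → F) :
    Idx r → L :=
  fun j => ∑ i : Idx r, algebraMap F L (f i) * ∏ k, α k ^ ((i k).val * (j k).val)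

/-- The Hamming weight of a codeword. -/
def wt {s : ℕ} {r : Fin s → ℕ} [∀ k, NeZero (r k)] (f : Idx r → F) : ℕ :=
  (Finset.univ.filter fun i : Idx r => f i ≠ 0).card

/-- The minimum distance of a code. -/
def dmin {s : ℕ} {r : Fin s → ℕ} [∀ k, NeZero (r k)] (C : Submodule F (Idx r → F)) : ℕ :=
  sInf {w | ∃ f ∈ C, f ≠ (0 : Idx r → F) ∧ wt f = w}

/-- The defining set `D_α(C) = {a ∈ I : f(α^a) = 0 for all f ∈ C}`. -/
def defSet {s : ℕ} (r : Fin s → ℕ) [∀ k, NeZero (r k)] (α : Fin s → L)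
    (C : Submodule F (Idx r → F)) : Set (Idx r) :=
  {a | ∀ f ∈ C, fourier α f a = 0}

/-- The apparent distance of a code `C` with respect to `α`:
`d_α*(C) = min {d*(M(φ_{α,e})) : 0 ≠ e = e² ∈ C}`. -/
def dStarAlpha {s : ℕ} (r : Fin s → ℕ) [∀ k, NeZero (r k)] (α : Fin s → L)
    (C : Submodule F (Idx r → F)) : ℕ :=
  sInf {d | ∃ e, e ∈ C ∧ e ≠ (0 : Idx r → F) ∧ conv e e = e ∧ apd r (fourier α e) = d}

/-- The apparent distance of a code: `d*(C) = max {d_β*(C) : β ∈ U}`, where `U`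
is the set of tuples of primitive roots of unity in `L`. -/
def dStarCode {s : ℕ} (r : Fin s → ℕ) [∀ k, NeZero (r k)] (L : Type*) [Field L] [Algebra F L]
    (C : Submodule F (Idx r → F)) : ℕ :=
  sSup {d | ∃ α : Fin s → L, (∀ k, IsPrimitiveRoot (α k) (r k)) ∧ dStarAlpha r α C = d}

/-- The defining set of the multivariate BCH code `B_q(α,γ,δ,b)`:
`∪_{k∈γ} ∪_{l=0}^{δ_k−2} ∪_{i ∈ I(k, b_k+l)} Q(i)`. -/
def bchDefSet {s : ℕ} (r : Fin s → ℕ) (q : ℕ) (γ : Finset (Fin s)) (δ b : Fin s → ℕ) :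
    Set (Idx r) :=
  ⋃ k ∈ γ, ⋃ l ∈ Finset.range (δ k - 1),
    ⋃ i ∈ {i : Idx r | i k = ((b k + l : ℕ) : ZMod (r k))}, qOrbit r q 1 i


/-!
The Fourier transform turns convolution into the pointwise product. Transforming twice gives back
`i ↦ |I| f(-i)`, and `|I|` is invertible in `L`, so the transform is bijective on `L`-valued
functions and injective on `F`-valued ones. It intertwines the Frobenius `x ↦ x ^ q` with
multiplication by `q` on `I`; since `F` is the fixed field of Frobenius, the transforms of
`F`-valued functions are exactly the `h` with `h (q j) = h j ^ q`. For `0`-`1`-valued `h` this says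
that `h` is constant on `q`-orbits, so idempotents of the group algebra correspond to `q`-orbits
hypermatrices. Finally, `f` lies in the ideal generated by an idempotent `e` iff the support of its
transform is contained in that of `e`, so both minima range over the same hypermatrices.
-/

section OrbitHypermatrices

variable {s : ℕ} {r : Fin s → ℕ} {q t : ℕ}

theorem mem_qOrbit_iff {a i : Idx r} : i ∈ qOrbit r q t a ↔ ∃ n : ℕ, i = (q ^ t) ^ n • a := by
  simp [qOrbit, funext_iff, pow_mul]

theorem orbitUnion_iff_forall_nsmul_mem {D : Set (Idx r)} :
    OrbitUnion r q t D ↔ ∀ a ∈ D, q ^ t • a ∈ D := by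
  refine ⟨fun hD a ha => hD a ha (mem_qOrbit_iff.2 ⟨1, by rw [pow_one]⟩), fun hD a ha i hi => ?_⟩
  obtain ⟨n, rfl⟩ := mem_qOrbit_iff.1 hi
  induction n with
  | zero => simpa using ha
  | succ n ih =>
    rw [pow_succ', mul_smul]
    exact hD _ (ih (mem_qOrbit_iff.2 ⟨n, rfl⟩))

theorem nsmul_injective_of_coprime {n : ℕ} (hn : ∀ k, n.Coprime (r k)) :
    Function.Injective fun j : Idx r => n • j := by
  intro a b hab
  funext k
  have hk : (n : ZMod (r k)) * a k = n * b k := by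
    simpa only [Pi.smul_apply, nsmul_eq_mul] using congrFun hab k
  exact ((ZMod.isUnit_iff_coprime n (r k)).2 (hn k)).mul_left_cancel hk

variable [∀ k, NeZero (r k)]

theorem OrbitUnion.nsmul_mem_iff {D : Set (Idx r)} (hD : OrbitUnion r q t D)
    (hq : ∀ k, q.Coprime (r k)) {j : Idx r} : q ^ t • j ∈ D ↔ j ∈ D := by
  have hinj : Function.Injective fun j : Idx r => q ^ t • j :=
    nsmul_injective_of_coprime fun k => (hq k).pow_left t
  have hmaps : Set.MapsTo (fun j : Idx r => q ^ t • j) D D := orbitUnion_iff_forall_nsmul_mem.1 hD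
  refine ⟨fun hj => ?_, @hmaps j⟩
  obtain ⟨a, ha, haj⟩ := ((D.toFinite.injOn_iff_bijOn_of_mapsTo hmaps).1 hinj.injOn).surjOn hj
  exact hinj haj ▸ ha

theorem isOrbitMx_iff (hq : ∀ k, q.Coprime (r k)) {P : Idx r → F} :
    IsOrbitMx r q t P ↔ IsIdempotentElem P ∧ ∀ j, P (q ^ t • j) = P j := by
  constructor
  · rintro ⟨D, hD, rfl⟩
    exact ⟨by ext j; simp [afforded], fun j => by simp only [afforded, hD.nsmul_mem_iff hq]⟩
  · rintro ⟨hidem, hinv⟩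
    refine ⟨{j | P j = 0}, orbitUnion_iff_forall_nsmul_mem.2 fun a ha => (hinv a).trans ha, ?_⟩
    ext j
    rcases IsIdempotentElem.iff_eq_zero_or_one.1 (congrFun hidem j) with hj | hj <;>
      simp [afforded, hj]

end OrbitHypermatrices

section Characters

variable {s : ℕ} {r : Fin s → ℕ} [∀ k, NeZero (r k)]

/-- The character `i ↦ α^{ij} = ∏ k, α k ^ (i k * j k)` of `I`, which evaluates the monomial `X^i`
at the point `α^j`. It is assembled from characters of the factors `ZMod (r k)`, so that no
representatives of `i k` and `j k` have to be chosen. -/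
def rootChar {M : Type*} [CommMonoid M] {α : Fin s → M} (hα : ∀ k, α k ^ r k = 1) (j : Idx r) :
    AddChar (Idx r) M :=
  ∏ k, ((AddChar.zmodChar (r k) (hα k)).mulShift (j k)).compAddMonoidHom
    (Pi.evalAddMonoidHom (fun k => ZMod (r k)) k)

theorem rootChar_apply {M : Type*} [CommMonoid M] {α : Fin s → M} (hα : ∀ k, α k ^ r k = 1)
    (j i : Idx r) : rootChar hα j i = ∏ k, AddChar.zmodChar (r k) (hα k) (j k * i k) := by
  simp [rootChar, AddChar.prod_apply]

theorem rootChar_comm {M : Type*} [CommMonoid M] {α : Fin s → M} (hα : ∀ k, α k ^ r k = 1)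
    (i j : Idx r) : rootChar hα i j = rootChar hα j i := by
  simp only [rootChar_apply, mul_comm]

theorem rootChar_nsmul {M : Type*} [CommMonoid M] {α : Fin s → M} (hα : ∀ k, α k ^ r k = 1)
    (n : ℕ) (j i : Idx r) : rootChar hα (n • j) i = rootChar hα j i ^ n := by
  rw [rootChar_comm, AddChar.map_nsmul_eq_pow, rootChar_comm]

theorem sum_rootChar {R : Type*} [CommRing R] [IsDomain R] {α : Fin s → R}
    (hα : ∀ k, IsPrimitiveRoot (α k) (r k)) (j : Idx r) :
    ∑ i, rootChar (fun k => (hα k).pow_eq_one) j i =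
      if j = 0 then (Fintype.card (Idx r) : R) else 0 := by
  have hfactor (k : Fin s) (b : ZMod (r k)) :
      ∑ a, AddChar.zmodChar (r k) (hα k).pow_eq_one (b * a) = if b = 0 then (r k : R) else 0 := by
    simpa [mul_comm] using
      AddChar.sum_mulShift b (AddChar.zmodChar_primitive_of_primitive_root (r k) (hα k))
  calc ∑ i, rootChar (fun k => (hα k).pow_eq_one) j i
      = ∏ k, ∑ a, AddChar.zmodChar (r k) (hα k).pow_eq_one (j k * a) := by
        simp only [rootChar_apply, Finset.prod_univ_sum, Fintype.piFinset_univ]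
    _ = ∏ k, if j k = 0 then (r k : R) else 0 := by simp only [hfactor]
    _ = if j = 0 then (Fintype.card (Idx r) : R) else 0 := by
        by_cases hj : j = 0
        · simp [hj, Fintype.card_pi, ZMod.card]
        · obtain ⟨k, hk⟩ := Function.ne_iff.1 hj
          rw [if_neg hj, Finset.prod_eq_zero (Finset.mem_univ k) (if_neg hk)]

theorem natCast_card_idx_ne_zero {R : Type*} [CommRing R] [IsDomain R] {α : Fin s → R}
    (hα : ∀ k, IsPrimitiveRoot (α k) (r k)) : (Fintype.card (Idx r) : R) ≠ 0 := by
  rw [Fintype.card_pi, Nat.cast_prod, Finset.prod_ne_zero_iff]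
  exact fun k _ => by simpa only [ZMod.card] using (hα k).neZero'.out

end Characters

section FourierTransform

variable {s : ℕ} {r : Fin s → ℕ} [∀ k, NeZero (r k)] {α : Fin s → L}

theorem fourier_eq_sum_rootChar (hα : ∀ k, α k ^ r k = 1) (f : Idx r → F) (j : Idx r) :
    fourier α f j = ∑ i, algebraMap F L (f i) * rootChar hα j i := by
  simp only [fourier, rootChar_apply, AddChar.zmodChar_apply, ZMod.val_mul,
    ← pow_eq_pow_mod _ (hα _), mul_comm]

theorem fourier_zero : fourier α (0 : Idx r → F) = 0 := by
  ext j
  simp [fourier]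

theorem fourier_algebraMap_comp (f : Idx r → F) :
    fourier α (algebraMap F L ∘ f) = fourier α f := rfl

theorem fourier_conv (hα : ∀ k, α k ^ r k = 1) (f g : Idx r → F) :
    fourier α (conv f g) = fourier α f * fourier α g := by
  ext j
  calc fourier α (conv f g) j
      = ∑ u, ∑ i, algebraMap F L (f u) * algebraMap F L (g (i - u)) * rootChar hα j i := by
        simp only [fourier_eq_sum_rootChar hα, conv, map_sum, map_mul, Finset.sum_mul]
        exact Finset.sum_comm
    _ = ∑ u, ∑ v, algebraMap F L (f u) * algebraMap F L (g v) * rootChar hα j (u + v) :=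
        Finset.sum_congr rfl fun u _ =>
          Fintype.sum_equiv (Equiv.subRight u) _ _ fun i => by simp
    _ = fourier α f j * fourier α g j := by
        simp only [fourier_eq_sum_rootChar hα, AddChar.map_add_eq_mul, Finset.sum_mul_sum,
          mul_mul_mul_comm]

theorem fourier_fourier (hα : ∀ k, IsPrimitiveRoot (α k) (r k)) (f : Idx r → F) (j : Idx r) :
    fourier α (fourier α f) j = Fintype.card (Idx r) * algebraMap F L (f (-j)) := by
  have hpow (k : Fin s) : α k ^ r k = 1 := (hα k).pow_eq_one
  calc fourier α (fourier α f) j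
      = ∑ i, ∑ u, algebraMap F L (f u) * rootChar hpow (u + j) i := by
        simp only [fourier_eq_sum_rootChar hpow, Algebra.algebraMap_self_apply, Finset.sum_mul,
          mul_assoc, rootChar_comm hpow (_ + j), AddChar.map_add_eq_mul, rootChar_comm hpow j]
    _ = ∑ u, algebraMap F L (f u) * ∑ i, rootChar hpow (u + j) i := by
        simp only [Finset.mul_sum]
        exact Finset.sum_comm
    _ = Fintype.card (Idx r) * algebraMap F L (f (-j)) := by
        simp [sum_rootChar hα, add_eq_zero_iff_eq_neg, mul_comm]

theorem fourier_injective (hα : ∀ k, IsPrimitiveRoot (α k) (r k)) :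
    Function.Injective (fourier α : (Idx r → F) → Idx r → L) := by
  intro f g hfg
  ext i
  have hcard : (Fintype.card (Idx r) : L) * algebraMap F L (f i) =
      Fintype.card (Idx r) * algebraMap F L (g i) := by
    simpa only [fourier_fourier hα, neg_neg] using congrFun (congrArg (fourier α) hfg) (-i)
  exact (algebraMap F L).injective (mul_left_cancel₀ (natCast_card_idx_ne_zero hα) hcard)

theorem fourier_surjective (hα : ∀ k, IsPrimitiveRoot (α k) (r k)) :
    Function.Surjective (fourier α : (Idx r → L) → Idx r → L) := by
  intro h
  refine ⟨fourier α fun i => (Fintype.card (Idx r) : L)⁻¹ * h (-i), ?_⟩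
  ext j
  rw [fourier_fourier hα, neg_neg, Algebra.algebraMap_self_apply,
    mul_inv_cancel_left₀ (natCast_card_idx_ne_zero hα)]

theorem isIdempotentElem_fourier_iff (hα : ∀ k, IsPrimitiveRoot (α k) (r k)) {f : Idx r → F} :
    IsIdempotentElem (fourier α f) ↔ conv f f = f := by
  rw [IsIdempotentElem, ← fourier_conv fun k => (hα k).pow_eq_one, (fourier_injective hα).eq_iff]

theorem exists_eq_conv_iff_hsupp_fourier_subset (hα : ∀ k, IsPrimitiveRoot (α k) (r k))
    {e f : Idx r → F} (hee : conv e e = e) :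
    (∃ g, f = conv g e) ↔ hsupp (fourier α f) ⊆ hsupp (fourier α e) := by
  have hconv (g : Idx r → F) : fourier α (conv g e) = fourier α g * fourier α e :=
    fourier_conv (fun k => (hα k).pow_eq_one) g e
  constructor
  · rintro ⟨g, rfl⟩ j hj
    rw [hconv] at hj
    exact right_ne_zero_of_mul hj
  · intro hsub
    refine ⟨f, fourier_injective hα ?_⟩
    ext j
    have he : fourier α e j = 0 ∨ fourier α e j = 1 :=
      IsIdempotentElem.iff_eq_zero_or_one.1 (congrFun ((isIdempotentElem_fourier_iff hα).2 hee) j)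
    have hf : fourier α e j = 0 → fourier α f j = 0 := not_imp_not.1 (@hsub j)
    rcases he with he | he <;> simp [hconv, he, hf]

end FourierTransform

section FiniteField

variable [Fintype F]

theorem mem_range_algebraMap_iff_pow_card_eq {x : L} :
    x ∈ Set.range (algebraMap F L) ↔ x ^ Fintype.card F = x := by
  constructor
  · rintro ⟨y, rfl⟩
    rw [← map_pow, FiniteField.pow_card]
  · intro hx
    have hsplits : (Polynomial.X ^ Fintype.card F - Polynomial.X : Polynomial F).Splits := by
      simpa using (FiniteField.isSplittingField_sub F F).splits
    exact hsplits.mem_range_of_isRoot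
      (FiniteField.X_pow_card_sub_X_ne_zero F Fintype.one_lt_card) (by simp [hx])

variable {s : ℕ} {r : Fin s → ℕ} [∀ k, NeZero (r k)] {α : Fin s → L}

theorem fourier_pow_card (hα : ∀ k, α k ^ r k = 1) (f : Idx r → L) (j : Idx r) :
    fourier α (f ^ Fintype.card F) (Fintype.card F • j) = fourier α f j ^ Fintype.card F := by
  calc fourier α (f ^ Fintype.card F) (Fintype.card F • j)
      = ∑ i, (f i * rootChar hα j i) ^ Fintype.card F := by
        simp only [fourier_eq_sum_rootChar hα, Algebra.algebraMap_self_apply, Pi.pow_apply,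
          rootChar_nsmul, mul_pow]
    _ = (∑ i, f i * rootChar hα j i) ^ Fintype.card F :=
        (map_sum (FiniteField.frobeniusAlgHom F L) _ _).symm
    _ = fourier α f j ^ Fintype.card F := by
        simp only [fourier_eq_sum_rootChar hα, Algebra.algebraMap_self_apply]

theorem mem_range_fourier_iff (hcop : ∀ k, (Fintype.card F).Coprime (r k))
    (hα : ∀ k, IsPrimitiveRoot (α k) (r k)) {h : Idx r → L} :
    h ∈ Set.range (fourier α : (Idx r → F) → Idx r → L) ↔
      ∀ j, h (Fintype.card F • j) = h j ^ Fintype.card F := by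
  have hfrob (f : Idx r → L) (j : Idx r) :=
    fourier_pow_card (F := F) (fun k => (hα k).pow_eq_one) f j
  constructor
  · rintro ⟨f, rfl⟩ j
    have hf : (algebraMap F L ∘ f) ^ Fintype.card F = algebraMap F L ∘ f :=
      funext fun i => mem_range_algebraMap_iff_pow_card_eq.1 ⟨f i, rfl⟩
    simpa only [hf, fourier_algebraMap_comp] using hfrob (algebraMap F L ∘ f) j
  · intro hh
    obtain ⟨g, rfl⟩ := fourier_surjective hα h
    have hg : g ^ Fintype.card F = g := by
      refine fourier_injective hα (funext fun j => ?_)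
      obtain ⟨i, rfl⟩ := Finite.surjective_of_injective (nsmul_injective_of_coprime hcop) j
      exact (hfrob g i).trans (hh i).symm
    choose f hf using fun i => mem_range_algebraMap_iff_pow_card_eq.2 (congrFun hg i)
    exact ⟨f, by rw [← fourier_algebraMap_comp, show algebraMap F L ∘ f = g from funext hf]⟩

theorem isOrbitMx_iff_exists_fourier_eq (hcop : ∀ k, (Fintype.card F).Coprime (r k))
    (hα : ∀ k, IsPrimitiveRoot (α k) (r k)) {P : Idx r → L} :
    IsOrbitMx r (Fintype.card F) 1 P ↔ ∃ f : Idx r → F, conv f f = f ∧ fourier α f = P := by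
  have hrange (hP : IsIdempotentElem P) :
      (∀ j, P (Fintype.card F • j) = P j) ↔ ∃ f : Idx r → F, fourier α f = P := by
    have hpow (j : Idx r) : P j ^ Fintype.card F = P j :=
      congrFun (hP.pow_eq Fintype.card_ne_zero) j
    simpa only [hpow, Set.mem_range] using (mem_range_fourier_iff hcop hα (h := P)).symm
  rw [isOrbitMx_iff hcop, pow_one, and_congr_right hrange]
  constructor
  · rintro ⟨hP, f, rfl⟩
    exact ⟨f, (isIdempotentElem_fourier_iff hα).1 hP, rfl⟩
  · rintro ⟨f, hff, rfl⟩
    exact ⟨(isIdempotentElem_fourier_iff hα).2 hff, f, rfl⟩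

theorem dStarAlpha_eq_mad_fourier (hcop : ∀ k, (Fintype.card F).Coprime (r k))
    (hα : ∀ k, IsPrimitiveRoot (α k) (r k)) {C : Submodule F (Idx r → F)} {e : Idx r → F}
    (hee : conv e e = e) (hgen : ∀ f, f ∈ C ↔ ∃ g : Idx r → F, f = conv g e) :
    dStarAlpha r α C = mad r (Fintype.card F) 1 (fourier α e) := by
  have hmem (f : Idx r → F) : f ∈ C ↔ hsupp (fourier α f) ⊆ hsupp (fourier α e) :=
    (hgen f).trans (exists_eq_conv_iff_hsupp_fourier_subset hα hee)
  have hne (f : Idx r → F) : f ≠ 0 ↔ fourier α f ≠ 0 := by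
    rw [← fourier_zero (F := F) (α := α), (fourier_injective hα).ne_iff]
  unfold dStarAlpha mad
  congr 1
  ext d
  simp only [isOrbitMx_iff_exists_fourier_eq hcop hα, hmem]
  constructor
  · rintro ⟨f, hsub, hf, hff, hd⟩
    exact ⟨fourier α f, ⟨f, hff, rfl⟩, (hne f).1 hf, hsub, hd⟩
  · rintro ⟨_, ⟨f, hff, rfl⟩, hf, hsub, hd⟩
    exact ⟨f, hsub, (hne f).2 hf, hff, hd⟩

end FiniteField

/-- Let `C` be an abelian code in `A_q(r_1,…,r_s)` and let `e` be
its generating idempotent.  Then for every `α ∈ U`,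
`d_α*(C) = mad(M(φ_{α,e}))`, and consequently
`d*(C) = max {mad(M(φ_{α,e})) : α ∈ U}`. -/
theorem dStarAlpha_eq_mad_fourier_of_generating_idempotent
    {s : ℕ} (r : Fin s → ℕ) [∀ k, NeZero (r k)] (hs : 0 < s)
    {F : Type*} [Field F] [Fintype F]
    (hcop : ∀ k, (Fintype.card F).Coprime (r k))
    (L : Type*) [Field L] [Algebra F L]
    (hroots : ∀ k, ∃ ζ : L, IsPrimitiveRoot ζ (r k))
    (C : Submodule F (Idx r → F)) (hC : IsAbelianCode C)
    (e : Idx r → F) (he : e ∈ C) (hee : conv e e = e)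
    (hgen : ∀ f, f ∈ C ↔ ∃ g : Idx r → F, f = conv g e) :
    (∀ α : Fin s → L, (∀ k, IsPrimitiveRoot (α k) (r k)) →
      dStarAlpha r α C = mad r (Fintype.card F) 1 (fourier α e)) ∧
    dStarCode r L C =
      sSup {d | ∃ α : Fin s → L, (∀ k, IsPrimitiveRoot (α k) (r k)) ∧
        mad r (Fintype.card F) 1 (fourier α e) = d} := by
  have hmain (α : Fin s → L) (hα : ∀ k, IsPrimitiveRoot (α k) (r k)) :
      dStarAlpha r α C = mad r (Fintype.card F) 1 (fourier α e) :=
    dStarAlpha_eq_mad_fourier hcop hα hee hgen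
  refine ⟨hmain, congrArg sSup (Set.ext fun d => exists_congr fun α => ?_)⟩
  exact and_congr_right fun hα => by rw [hmain α hα]

end AbelianCodes
end
end

section
/- Let D be a union of q^t-orbits with M = M(D) ≠ 0, and let H_M(k,b) be an involved hypercolumn in the computation of d*(M), with 1 ≤ k ≤ s and b ∈ Z_{r_k}. If d*(H_M(k,b)) = 1, then mad(M) = d*(M). -/
open Classical

noncomputable section

namespace AbelianCodes

variable {F : Type*} [Field F]

/-!
Let `P ≠ 0` have support inside that of `M`.  Walking backwards from `b` along axis `k`, let `c` be
the first index (possibly `b` itself) at which the hypercolumn of `P` is nonzero.  After `c`, the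
hypercolumns of `P` vanish up to and including index `b` by the choice of `c`, and then for another
`ω_M(k,b)` steps because those of `M` do.  Hence `ω_P(k,c) ≥ ω_M(k,b)` and
`d*(P) ≥ ω_M(k,b) + 1`, which is `d*(M)` when `H_M(k,b)` is involved with apparent distance `1`.
-/

theorem le_card_filter_Ico_one_iff {p : ℕ → Prop} {_ : DecidablePred p} (hp : Antitone p)
    (hp0 : p 0) {w n : ℕ} (hw : w < n) : w ≤ ((Finset.Ico 1 n).filter p).card ↔ p w := by
  constructor
  · intro hcard
    by_contra hpw
    have hsub : (Finset.Ico 1 n).filter p ⊆ Finset.Ico 1 w := by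
      intro j hj
      rw [Finset.mem_filter, Finset.mem_Ico] at hj
      exact Finset.mem_Ico.mpr ⟨hj.1.1, not_le.mp fun hwj => hpw (hp hwj hj.2)⟩
    have hw0 : w ≠ 0 := fun h => hpw (h ▸ hp0)
    have hle := hcard.trans (Finset.card_le_card hsub)
    rw [Nat.card_Ico] at hle
    omega
  · intro hpw
    have hsub : Finset.Ico 1 (w + 1) ⊆ (Finset.Ico 1 n).filter p := by
      intro j hj
      rw [Finset.mem_Ico] at hj
      exact Finset.mem_filter.mpr ⟨Finset.mem_Ico.mpr ⟨hj.1, by omega⟩, hp (by omega) hpw⟩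
    simpa only [Nat.card_Ico, Nat.add_sub_cancel] using Finset.card_le_card hsub

section Hypercol

variable {s : ℕ} {r : Fin (s + 1) → ℕ}

theorem exists_hypercol_ne_zero {P : Idx r → F} (hP : P ≠ 0) (k : Fin (s + 1)) :
    ∃ c, hypercol P k c ≠ 0 := by
  obtain ⟨i, hi⟩ := Function.ne_iff.mp hP
  refine ⟨i k, Function.ne_iff.mpr ⟨k.removeNth i, ?_⟩⟩
  rwa [hypercol, Fin.insertNth_self_removeNth]

theorem hypercol_eq_zero_of_hsupp_subset {P M : Idx r → F} (hPM : hsupp P ⊆ hsupp M)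
    {k : Fin (s + 1)} {c : ZMod (r k)} (hM : hypercol M k c = 0) : hypercol P k c = 0 := by
  funext x
  by_contra hx
  exact hPM hx (congrFun hM x)

theorem exists_nearest_hypercol_ne_zero_backward {P : Idx r → F} (hP : P ≠ 0) (k : Fin (s + 1))
    [NeZero (r k)] (b : ZMod (r k)) :
    ∃ j : ℕ, hypercol P k (b - j) ≠ 0 ∧ ∀ m < j, hypercol P k (b - m) = 0 := by
  have hex : ∃ j : ℕ, hypercol P k (b - j) ≠ 0 := by
    obtain ⟨c, hc⟩ := exists_hypercol_ne_zero hP k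
    refine ⟨(b - c).val, ?_⟩
    rwa [ZMod.natCast_zmod_val, sub_sub_cancel]
  exact ⟨Nat.find hex, Nat.find_spec hex, fun m hm => not_not.mp (Nat.find_min hex hm)⟩

end Hypercol

section RunLen

variable {s : ℕ} {r : Fin (s + 1) → ℕ}

theorem runLen_lt (M : Idx r → F) (k : Fin (s + 1)) [NeZero (r k)] (b : ZMod (r k)) :
    runLen M k b < r k :=
  -- `(_)` lets unification supply the decidability instance fixed in `runLen`.
  calc
    runLen M k b ≤ (Finset.Ico 1 (r k)).card := @Finset.card_filter_le _ _ _ (_)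
    _ = r k - 1 := Nat.card_Ico _ _
    _ < r k := Nat.sub_lt (NeZero.pos _) one_pos

theorem le_runLen_iff {M : Idx r → F} {k : Fin (s + 1)} {b : ZMod (r k)} {w : ℕ}
    (hw : w < r k) :
    w ≤ runLen M k b ↔ ∀ m ∈ Finset.Icc 1 w, hypercol M k (b + m) = 0 := by
  have hanti : Antitone fun j : ℕ => ∀ m ∈ Finset.Icc 1 j, hypercol M k (b + m) = 0 :=
    fun _ _ hij h m hm => h m (Finset.Icc_subset_Icc_right hij hm)
  exact le_card_filter_Ico_one_iff hanti (by simp) hw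

theorem exists_runLen_le_of_hsupp_subset {P M : Idx r → F} (hP : P ≠ 0)
    (hPM : hsupp P ⊆ hsupp M) (k : Fin (s + 1)) [NeZero (r k)] (b : ZMod (r k)) :
    ∃ c, hypercol P k c ≠ 0 ∧ runLen M k b ≤ runLen P k c := by
  obtain ⟨j, hj, hbefore⟩ := exists_nearest_hypercol_ne_zero_backward hP k b
  have hw := runLen_lt M k b
  refine ⟨b - j, hj, (le_runLen_iff hw).mpr fun m hm => ?_⟩
  obtain ⟨hm1, hmw⟩ := Finset.mem_Icc.mp hm
  rcases le_or_gt m j with hmj | hjm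
  · have hcol := hbefore (j - m) (by omega)
    rwa [Nat.cast_sub hmj, ← sub_add] at hcol
  · have hcol := hypercol_eq_zero_of_hsupp_subset hPM <|
      (le_runLen_iff hw).mp le_rfl (m - j) (Finset.mem_Icc.mpr ⟨by omega, by omega⟩)
    rwa [Nat.cast_sub hjm.le, add_sub_left_comm, add_comm] at hcol

end RunLen

section ApparentDistance

theorem runLen_succ_mul_apd_hypercol_le_apd {s : ℕ} {r : Fin (s + 1) → ℕ} (P : Idx r → F)
    (k : Fin (s + 1)) [NeZero (r k)] (c : ZMod (r k)) :
    (runLen P k c + 1) * apd (fun j => r (k.succAbove j)) (hypercol P k c) ≤ apd r P := by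
  rw [apd]
  refine Finset.le_sup_of_le (Finset.mem_univ k) <|
    Finset.le_sup_of_le (Finset.mem_univ (⟨c.val, ZMod.val_lt c⟩ : Fin (r k))) ?_
  simp only [ZMod.natCast_zmod_val, le_refl]

theorem apd_pos {s : ℕ} (r : Fin s → ℕ) [∀ k, NeZero (r k)] {P : Idx r → F} (hP : P ≠ 0) :
    0 < apd r P := by
  induction s with
  | zero =>
    obtain ⟨i, hi⟩ := Function.ne_iff.mp hP
    have hscalar : P finZeroElim ≠ 0 := by rwa [Subsingleton.elim i finZeroElim] at hi
    rw [apd, if_neg hscalar]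
    exact one_pos
  | succ s ih =>
    obtain ⟨c, hc⟩ := exists_hypercol_ne_zero hP 0
    exact (Nat.mul_pos (Nat.succ_pos _) (ih _ hc)).trans_le
      (runLen_succ_mul_apd_hypercol_le_apd P 0 c)

theorem runLen_succ_le_apd_of_hsupp_subset {s : ℕ} (r : Fin (s + 1) → ℕ) [∀ k, NeZero (r k)]
    {P M : Idx r → F} (hP : P ≠ 0) (hPM : hsupp P ⊆ hsupp M) (k : Fin (s + 1))
    (b : ZMod (r k)) : runLen M k b + 1 ≤ apd r P := by
  obtain ⟨c, hc, hrun⟩ := exists_runLen_le_of_hsupp_subset hP hPM k b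
  calc
    runLen M k b + 1 ≤ runLen P k c + 1 := Nat.succ_le_succ hrun
    _ ≤ (runLen P k c + 1) * apd (fun j => r (k.succAbove j)) (hypercol P k c) :=
      Nat.le_mul_of_pos_right _ (apd_pos _ hc)
    _ ≤ apd r P := runLen_succ_mul_apd_hypercol_le_apd P k c

end ApparentDistance

theorem mad_eq_apd_of_involved_hypercol_one_general {s : ℕ} (r : Fin (s + 1) → ℕ)
    [∀ k, NeZero (r k)] (q t : ℕ) {M : Idx r → F} (hM : IsOrbitMx r q t M) (hM0 : M ≠ 0)
    {k : Fin (s + 1)} {b : ZMod (r k)} (hapd : apd r M ≤ runLen M k b + 1) :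
    mad r q t M = apd r M := by
  refine IsLeast.csInf_eq ⟨⟨M, hM, hM0, subset_rfl, rfl⟩, ?_⟩
  rintro _ ⟨P, -, hP, hPM, rfl⟩
  exact hapd.trans (runLen_succ_le_apd_of_hsupp_subset r hP hPM k b)

/-- Let `M = M(D) ≠ 0` be a `q^t`-orbits hypermatrix and let
`H_M(k,b)` be an involved hypercolumn in the computation of `d*(M)`.  If
`d*(H_M(k,b)) = 1`, then `mad(M) = d*(M)`. -/
theorem mad_eq_apd_of_involved_hypercol_one
    {s : ℕ} (r : Fin (s+1) → ℕ)
    (p q t : ℕ) (hp : p.Prime) (hq : ∃ m : ℕ, 0 < m ∧ q = p ^ m) (ht : 0 < t)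
    (hr : ∀ k, 0 < r k) (hpr : ∀ k, ¬ p ∣ r k)
    {F : Type*} [Field F]
    (M : Idx r → F) (hM : IsOrbitMx r q t M) (hM0 : M ≠ 0)
    (k : Fin (s+1)) (b : ZMod (r k))
    (hcol : hypercol M k b ≠ 0)
    (hinv : apd r M =
      (runLen M k b + 1) * apd (fun j => r (k.succAbove j)) (hypercol M k b))
    (hone : apd (fun j => r (k.succAbove j)) (hypercol M k b) = 1) :
    mad r q t M = apd r M := by
  have : ∀ k, NeZero (r k) := fun k => ⟨(hr k).ne'⟩
  exact mad_eq_apd_of_involved_hypercol_one_general r q t hM hM0 (by rw [hinv, hone, mul_one])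

end AbelianCodes
end
end
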